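/- Let k ≥ 1 be an integer, λ > 1 a real number, and suppose (z,w) ∈ ℂ² satisfies w^(k+1) = z·((z-λ⁻¹)/(λ-z))^k with z ∉ {0, λ, λ⁻¹} and w ≠ 0. Then the point (z', w') := (1/z, λ^(-2k/(k+1))/w) also satisfies (w')^(k+1) = z'·((z'-λ⁻¹)/(λ-z'))^k. Moreover, setting G(z,w) := λ^(k/(k+1))·w, one has G(z',w') = G(z,w)⁻¹. (The map κ₂(z,w) = (1/z, λ^(-2k/(k+1))/w) is a symmetry of the Riemann surface M̄ and inverts the hyperbolic Gauss map G.) -/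

import Mathlib

open Complex

/-!
Put `φ z = (z - l⁻¹) / (l - z)`, so that the curve is `w ^ (k + 1) = z * φ z ^ k`. The inversion
`z ↦ 1 / z` swaps the zero and the pole of `φ`, and `φ (1 / z) = (l ^ 2 * φ z)⁻¹`. If
`a ^ (k + 1) = l ^ k`, the resulting factor `(l ^ 2)⁻¹ ^ k` is `(a ^ 2)⁻¹ ^ (k + 1)`, which
`w ↦ (a ^ 2)⁻¹ / w` absorbs. Over the reals one takes `a = l ^ (k / (k + 1))`.
-/

section Field

variable {K : Type*} [Field K]

/-- The points of the affine part of `M̄`, `w ^ (k + 1) = z * ((z - l⁻¹) / (l - z)) ^ k`, lying over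
`z ∉ {0, l, l⁻¹}`. Over these the right-hand side is finite and nonzero, hence so is `w`. -/
def puncturedCurve (k : ℕ) (l : K) : Set (K × K) :=
  {p | p.1 ≠ 0 ∧ p.1 ≠ l ∧ p.1 ≠ l⁻¹ ∧ p.2 ^ (k + 1) = p.1 * ((p.1 - l⁻¹) / (l - p.1)) ^ k}

/-- The map `κ₂`, with the constant `λ ^ (-2k / (k + 1))` written as `(a ^ 2)⁻¹`, where `a` is a
`(k + 1)`-st root of `λ ^ k`. -/
def curveSymmetry (a : K) (p : K × K) : K × K :=
  (1 / p.1, (a ^ 2)⁻¹ / p.2)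

/-- The hyperbolic Gauss map `G`, with `a` in place of `λ ^ (k / (k + 1))`. -/
def gaussMap (a : K) (p : K × K) : K :=
  a * p.2

theorem one_div_sub_inv_div_sub_one_div {l z : K} (hl : l ≠ 0) (hz : z ≠ 0) :
    (1 / z - l⁻¹) / (l - 1 / z) = (l ^ 2 * ((z - l⁻¹) / (l - z)))⁻¹ := by
  have hnum : 1 / z - l⁻¹ = (l - z) / (l * z) := by field_simp
  have hden : l - 1 / z = l * (z - l⁻¹) / z := by field_simp
  rw [hnum, hden, mul_inv, inv_div]
  field_simp

theorem inv_sq_div_pow_succ_eq {k : ℕ} {l a z w : K} (hl : l ≠ 0) (ha : a ^ (k + 1) = l ^ k)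
    (hz : z ≠ 0) (hzw : w ^ (k + 1) = z * ((z - l⁻¹) / (l - z)) ^ k) :
    ((a ^ 2)⁻¹ / w) ^ (k + 1) = 1 / z * ((1 / z - l⁻¹) / (l - 1 / z)) ^ k := by
  calc ((a ^ 2)⁻¹ / w) ^ (k + 1)
      = ((a ^ (k + 1)) ^ 2 * w ^ (k + 1))⁻¹ := by
        rw [div_pow, inv_pow, pow_right_comm, mul_inv, div_eq_mul_inv]
    _ = ((l ^ k) ^ 2 * (z * ((z - l⁻¹) / (l - z)) ^ k))⁻¹ := by rw [ha, hzw]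
    _ = 1 / z * ((l ^ 2 * ((z - l⁻¹) / (l - z)))⁻¹) ^ k := by
        rw [pow_right_comm, mul_left_comm, ← mul_pow, mul_inv, inv_pow, one_div]
    _ = 1 / z * ((1 / z - l⁻¹) / (l - 1 / z)) ^ k := by
        rw [one_div_sub_inv_div_sub_one_div hl hz]

theorem curveSymmetry_mem_puncturedCurve {k : ℕ} {l a : K} (hl : l ≠ 0)
    (ha : a ^ (k + 1) = l ^ k) {p : K × K} (hp : p ∈ puncturedCurve k l) :
    curveSymmetry a p ∈ puncturedCurve k l := by
  obtain ⟨hz, hzl, hzl_inv, hzw⟩ := hp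
  refine ⟨one_div_ne_zero hz, ?_, ?_, inv_sq_div_pow_succ_eq hl ha hz hzw⟩
  · simpa only [curveSymmetry, one_div, ne_eq, inv_eq_iff_eq_inv] using hzl_inv
  · simpa only [curveSymmetry, one_div, ne_eq, inv_inj] using hzl

theorem gaussMap_curveSymmetry (a : K) (p : K × K) :
    gaussMap a (curveSymmetry a p) = (gaussMap a p)⁻¹ := by
  simp only [gaussMap, curveSymmetry]
  field_simp

theorem stmt_2_general {k : ℕ} {l a : K} (hl : l ≠ 0) (ha : a ^ (k + 1) = l ^ k) {p : K × K}
    (hp : p ∈ puncturedCurve k l) :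
    curveSymmetry a p ∈ puncturedCurve k l ∧
      gaussMap a (curveSymmetry a p) = (gaussMap a p)⁻¹ :=
  ⟨curveSymmetry_mem_puncturedCurve hl ha hp, gaussMap_curveSymmetry a p⟩

end Field

theorem rpow_div_add_one_pow_succ {x : ℝ} (hx : 0 ≤ x) (s : ℝ) (k : ℕ) :
    (x ^ (s / ((k : ℝ) + 1))) ^ (k + 1) = x ^ s := by
  rw [← Real.rpow_mul_natCast hx, Nat.cast_add_one, div_mul_cancel₀ s k.cast_add_one_ne_zero]

theorem rpow_neg_two_mul_div {x : ℝ} (hx : 0 ≤ x) (s t : ℝ) :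
    x ^ (-(2 * s) / t) = ((x ^ (s / t)) ^ 2)⁻¹ := by
  rw [← Real.rpow_mul_natCast hx, ← Real.rpow_neg hx]
  congr 1
  push_cast
  ring

/-- The map `κ₂(z,w) = (1/z, λ^(-2k/(k+1))/w)` is a symmetry of the Riemann surface
`w^(k+1) = z ((z-λ⁻¹)/(λ-z))^k` and inverts the hyperbolic Gauss map
`G(z,w) = λ^(k/(k+1)) w`. -/
theorem stmt_2 (k : ℕ) (hk : 1 ≤ k) (lam : ℝ) (hlam : 1 < lam) (z w : ℂ)
    (hzw : w ^ (k + 1) = z * ((z - (lam : ℂ)⁻¹) / ((lam : ℂ) - z)) ^ k)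
    (hz0 : z ≠ 0) (hzl : z ≠ (lam : ℂ)) (hzli : z ≠ (lam : ℂ)⁻¹) (hw : w ≠ 0) :
    (((lam ^ (-(2 * (k : ℝ)) / ((k : ℝ) + 1)) : ℝ) : ℂ) / w) ^ (k + 1) =
        (1 / z) * (((1 / z) - (lam : ℂ)⁻¹) / ((lam : ℂ) - (1 / z))) ^ k ∧
      ((lam ^ ((k : ℝ) / ((k : ℝ) + 1)) : ℝ) : ℂ) *
          (((lam ^ (-(2 * (k : ℝ)) / ((k : ℝ) + 1)) : ℝ) : ℂ) / w) =
        (((lam ^ ((k : ℝ) / ((k : ℝ) + 1)) : ℝ) : ℂ) * w)⁻¹ := by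
  have hlam0 : 0 < lam := one_pos.trans hlam
  have hroot : ((lam ^ ((k : ℝ) / ((k : ℝ) + 1)) : ℝ) : ℂ) ^ (k + 1) = (lam : ℂ) ^ k := by
    rw [← ofReal_pow, rpow_div_add_one_pow_succ hlam0.le, Real.rpow_natCast, ofReal_pow]
  rw [rpow_neg_two_mul_div hlam0.le, ofReal_inv, ofReal_pow]
  obtain ⟨⟨-, -, -, hcurve⟩, hgauss⟩ :=
    stmt_2_general (p := (z, w)) (ofReal_ne_zero.mpr hlam0.ne') hroot ⟨hz0, hzl, hzli, hzw⟩
  exact ⟨hcurve, hgauss⟩
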